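/- arXiv:2001.09525 — 2 statements merged into one kernel-verified Lean document; each statement's English description precedes it below -/
import Mathlib

section
/- For every acute triangle ABC with side lengths a < b < c, one has t(ABC₁) < t(AB̄C) and t(ABC₂) < t(ĀBC). Together with t(AB₁C) < t(ABC̄), this implies that a minimum area isosceles container of an acute triangle never equals a special container of the third kind. -/
open EuclideanGeometry MeasureTheory Real

noncomputable section

/-- The Euclidean plane. -/
abbrev Pt : Type := EuclideanSpace ℝ (Fin 2)

/-- The closed triangular region with vertices `A`, `B`, `C`
(the convex hull of the three vertices). -/
def tri (A B C : Pt) : Set Pt := convexHull ℝ {A, B, C}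

/-- The area of the triangle `A B C`:
the 2-dimensional Lebesgue measure of its convex hull. -/
def triArea (A B C : Pt) : ℝ := (volume (tri A B C)).toReal

/-- A triangle is isosceles if at least two of its side lengths coincide. -/
def IsIsosceles (A B C : Pt) : Prop :=
  dist B C = dist C A ∨ dist C A = dist A B ∨ dist A B = dist B C

/-- `S P R` is an isosceles container for the triangle `A B C`:
it is a genuine isosceles triangle whose convex hull contains that of `A B C`. -/
def IsIsoscelesContainer (A B C S P R : Pt) : Prop :=
  AffineIndependent ℝ ![S, P, R] ∧ IsIsosceles S P R ∧ tri A B C ⊆ tri S P R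

/-- `S P R` is a minimum area isosceles container for the triangle `A B C`. -/
def IsMinIsoscelesContainer (A B C S P R : Pt) : Prop :=
  IsIsoscelesContainer A B C S P R ∧
    ∀ S' P' R' : Pt, IsIsoscelesContainer A B C S' P' R' →
      triArea S P R ≤ triArea S' P' R'

/-- `Z` lies on the ray starting at `X` passing through `Y`. -/
def OnRay (X Y Z : Pt) : Prop := SameRay ℝ (Y - X) (Z - X)

open Module AffineMap
open scoped Pointwise

theorem dist_sq_coord (X Y : Pt) : dist X Y ^ 2 = (X 0 - Y 0) ^ 2 + (X 1 - Y 1) ^ 2 := by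
  simp [EuclideanSpace.dist_sq_eq, Real.dist_eq, sq_abs]

theorem lineMap_coord (X Y : Pt) (s : ℝ) (i : Fin 2) :
    lineMap X Y s i = X i + s * (Y i - X i) := by
  simp [lineMap_apply]; ring

theorem linearIndependent_sub_pair {A B C : Pt} (h : AffineIndependent ℝ ![A, B, C]) :
    LinearIndependent ℝ ![B - A, C - A] := by
  rw [affineIndependent_iff_linearIndependent_vsub ℝ _ (0 : Fin 3),
    ← linearIndependent_equiv (finSuccAboveEquiv (0 : Fin 3))] at h
  convert! h
  ext i
  fin_cases i <;> rfl

theorem tri_eq_vadd (A B C : Pt) : tri A B C = A +ᵥ convexHull ℝ {0, B - A, C - A} := by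
  rw [tri, ← convexHull_vadd]
  congr 1
  simp [Set.vadd_set_insert]

theorem triArea_lineMap {A B C : Pt} (h : AffineIndependent ℝ ![A, B, C]) (s : ℝ) :
    triArea A B (lineMap A C s) = |s| * triArea A B C := by
  let b := basisOfLinearIndependentOfCardEqFinrank (linearIndependent_sub_pair h) (by simp)
  let T : Pt →ₗ[ℝ] Pt := Matrix.toLin b b (Matrix.diagonal ![1, s])
  have hb : ⇑b = ![B - A, C - A] := coe_basisOfLinearIndependentOfCardEqFinrank _ _
  have hdet : LinearMap.det T = s := by
    simp [T, LinearMap.det_toLin, Matrix.det_diagonal]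
  have hTb (i : Fin 2) : T (b i) = (![1, s] i : ℝ) • b i := by
    simp [T, Matrix.toLin_self, Matrix.diagonal_apply]
  have h0 : T (B - A) = B - A := by simpa [hb] using hTb 0
  have h1 : T (C - A) = lineMap A C s - A := by
    simpa [hb, lineMap_apply] using hTb 1
  have himage : convexHull ℝ {0, B - A, lineMap A C s - A} =
      T '' convexHull ℝ {0, B - A, C - A} := by
    rw [LinearMap.image_convexHull, Set.image_insert_eq, Set.image_pair, h0, h1, map_zero]
  rw [triArea, triArea, tri_eq_vadd, tri_eq_vadd, measure_vadd, measure_vadd, himage,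
    Measure.addHaar_image_linearMap, hdet, ENNReal.toReal_mul,
    ENNReal.toReal_ofReal (abs_nonneg s)]

theorem triArea_pos {A B C : Pt} (h : AffineIndependent ℝ ![A, B, C]) : 0 < triArea A B C := by
  have hspan : affineSpan ℝ {A, B, C} = ⊤ := by
    have := (h.affineSpan_eq_top_iff_card_eq_finrank_add_one).2 (by simp)
    rwa [Matrix.range_cons, Matrix.range_cons_cons_empty] at this
  have hint : (interior (tri A B C)).Nonempty :=
    interior_convexHull_nonempty_iff_affineSpan_eq_top.2 hspan
  have hcomp : IsCompact (tri A B C) := (Set.toFinite {A, B, C}).isCompact_convexHull ℝ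
  exact ENNReal.toReal_pos (Measure.measure_pos_of_nonempty_interior volume hint).ne'
    hcomp.measure_lt_top.ne

theorem tri_subset_lineMap (A B C : Pt) {s : ℝ} (hs : 1 ≤ s) :
    tri A B C ⊆ tri A B (lineMap A C s) := by
  have hA : A ∈ tri A B (lineMap A C s) := subset_convexHull _ _ (by simp)
  have hB : B ∈ tri A B (lineMap A C s) := subset_convexHull _ _ (by simp)
  have hP : lineMap A C s ∈ tri A B (lineMap A C s) := subset_convexHull _ _ (by simp)
  refine convexHull_min ?_ (convex_convexHull ℝ _)
  rintro x (rfl | rfl | rfl)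
  · exact hA
  · exact hB
  · refine (convex_convexHull ℝ _).segment_subset hA hP ?_
    rw [segment_eq_image_lineMap]
    refine ⟨s⁻¹, ⟨by positivity, inv_le_one_of_one_le₀ hs⟩, ?_⟩
    have : s ≠ 0 := by positivity
    simp [lineMap_apply, smul_smul, this]

theorem affineIndependent_lineMap {A B C : Pt} (h : AffineIndependent ℝ ![A, B, C])
    {s : ℝ} (hs : s ≠ 0) : AffineIndependent ℝ ![A, B, lineMap A C s] := by
  rw [affineIndependent_iff_not_collinear_set] at h ⊢
  have hC : C = lineMap A (lineMap A C s) s⁻¹ := by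
    simp [lineMap_apply, smul_smul, hs]
  have hmem : C ∈ affineSpan ℝ {A, B, lineMap A C s} := by
    have hA : A ∈ affineSpan ℝ {A, B, lineMap A C s} := mem_affineSpan ℝ (by simp)
    have hP : lineMap A C s ∈ affineSpan ℝ {A, B, lineMap A C s} := mem_affineSpan ℝ (by simp)
    have hmem := lineMap_mem s⁻¹ hA hP
    rwa [← hC] at hmem
  contrapose! h
  refine ((collinear_insert_iff_of_mem_affineSpan hmem).2 h).subset ?_
  intro x
  simp only [Set.mem_insert_iff, Set.mem_singleton_iff]
  tauto

theorem OnRay.exists_lineMap {X Y Z W : Pt} (h : OnRay X Y Z) (hXY : Y ≠ X) (hZ : Z ≠ X)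
    (hdist : dist W Z = dist X W) :
    ∃ s : ℝ, Z = lineMap X Y s ∧
      s * dist X Y ^ 2 = dist X Y ^ 2 + dist X W ^ 2 - dist Y W ^ 2 := by
  obtain ⟨r₁, r₂, h₁, h₂, hr⟩ := SameRay.exists_pos h (sub_ne_zero.2 hXY) (sub_ne_zero.2 hZ)
  have hs : r₂⁻¹ * r₁ ≠ 0 := by positivity
  have hZeq : Z = lineMap X Y (r₂⁻¹ * r₁) := by
    rw [lineMap_apply, mul_smul, vsub_eq_sub, hr, smul_smul, inv_mul_cancel₀ h₂.ne']
    simp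
  refine ⟨_, hZeq, mul_left_cancel₀ hs ?_⟩
  have := congrArg (· ^ 2) hdist
  rw [hZeq] at this
  simp only [dist_sq_coord, lineMap_coord] at this ⊢
  linear_combination this

theorem exists_lineMap_of_dist_eq {X Y Z P : Pt} (h : P ∈ line[ℝ, X, Y])
    (hdist : dist P Z = dist P X) :
    ∃ r : ℝ, P = lineMap X Y r ∧
      r * (dist X Y ^ 2 + dist X Z ^ 2 - dist Y Z ^ 2) = dist X Z ^ 2 := by
  obtain ⟨r, rfl⟩ := mem_affineSpan_pair_iff_exists_lineMap_eq.1 h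
  refine ⟨r, rfl, ?_⟩
  have := congrArg (· ^ 2) hdist
  simp only [dist_sq_coord, lineMap_coord] at this ⊢
  linear_combination -this

theorem dist_lineMap_eq {X Y W : Pt} {s : ℝ}
    (hs : s * dist X Y ^ 2 = dist X Y ^ 2 + dist X W ^ 2 - dist Y W ^ 2) :
    dist W (lineMap X Y s) = dist X W := by
  rw [← sq_eq_sq₀ dist_nonneg dist_nonneg]
  simp only [dist_sq_coord, lineMap_coord] at hs ⊢
  linear_combination s * hs

theorem dist_sq_lt_of_angle_lt {X Y Z : Pt} (hX : X ≠ Y) (hZ : Z ≠ Y) (h : ∠ X Y Z < π / 2) :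
    dist X Z ^ 2 < dist X Y ^ 2 + dist Z Y ^ 2 := by
  have hcos : 0 < Real.cos (∠ X Y Z) :=
    Real.cos_pos_of_mem_Ioo ⟨by linarith [angle_nonneg X Y Z, pi_pos], h⟩
  have := dist_pos.2 hX
  have := dist_pos.2 hZ
  have : 0 < dist X Y * dist Z Y * Real.cos (∠ X Y Z) := by positivity
  nlinarith [law_cos X Y Z]

theorem abs_mul_lt_abs_mul {K x y z s r : ℝ} (hK : 0 < K) (hx : 0 < x)
    (hyz : y < z) (hxyz : z < x + y) (hs : s * x = x + z - y)
    (hr : r * (x + y - z) = x) : |s| * K < |r| * K := by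
  have hd : 0 < x + y - z := by linarith
  obtain rfl : s = (x + z - y) / x := by rw [eq_div_iff hx.ne', hs]
  obtain rfl : r = x / (x + y - z) := by rw [eq_div_iff hd.ne', hr]
  refine mul_lt_mul_of_pos_right ?_ hK
  rw [abs_of_pos (div_pos (by linarith) hx), abs_of_pos (div_pos hx hd), div_lt_div_iff₀ hx hd]
  nlinarith [mul_pos (sub_pos.2 hyz) (sub_pos.2 hyz)]

theorem tri_swap_left (A B C : Pt) : tri B A C = tri A B C := by
  rw [tri, tri, Set.insert_comm]

theorem tri_swap_right (A B C : Pt) : tri A C B = tri A B C := by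
  rw [tri, tri, Set.pair_comm]

theorem triArea_swap_left (A B C : Pt) : triArea B A C = triArea A B C := by
  rw [triArea, triArea, tri_swap_left]

theorem triArea_swap_right (A B C : Pt) : triArea A C B = triArea A B C := by
  rw [triArea, triArea, tri_swap_right]

theorem affineIndependent_swap_left {A B C : Pt} (h : AffineIndependent ℝ ![A, B, C]) :
    AffineIndependent ℝ ![B, A, C] := by
  rwa [affineIndependent_iff_not_collinear_set, Set.insert_comm,
    ← affineIndependent_iff_not_collinear_set]

theorem affineIndependent_swap_right {A B C : Pt} (h : AffineIndependent ℝ ![A, B, C]) :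
    AffineIndependent ℝ ![A, C, B] := by
  rwa [affineIndependent_iff_not_collinear_set, Set.pair_comm,
    ← affineIndependent_iff_not_collinear_set]

theorem isIsoscelesContainer_lineMap {A B C : Pt} (h : AffineIndependent ℝ ![A, B, C]) {s : ℝ}
    (hs : 1 ≤ s) (hdist : dist B (lineMap A C s) = dist A B) :
    IsIsoscelesContainer A B C A B (lineMap A C s) :=
  ⟨affineIndependent_lineMap h (by positivity), .inr (.inr hdist.symm), tri_subset_lineMap A B C hs⟩

theorem IsIsoscelesContainer.congr_tri {A B C A' B' C' S P R : Pt}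
    (h : IsIsoscelesContainer A B C S P R) (ht : tri A' B' C' = tri A B C) :
    IsIsoscelesContainer A' B' C' S P R :=
  ⟨h.1, h.2.1, ht ▸ h.2.2⟩

theorem IsMinIsoscelesContainer.tri_ne {A B C S P R S' P' R' X Y Z : Pt}
    (h : IsMinIsoscelesContainer A B C S P R) (h' : IsIsoscelesContainer A B C S' P' R')
    (hlt : triArea S' P' R' < triArea X Y Z) : tri S P R ≠ tri X Y Z := by
  intro heq
  refine (h.2 S' P' R' h').not_gt ?_
  simpa only [triArea, heq] using hlt

theorem one_le_of_mul_eq {s x y z : ℝ} (hx : 0 < x) (hyz : y < z) (hs : s * x = x + z - y) :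
    1 ≤ s := by
  by_contra! h
  nlinarith

/-- for an acute triangle `A B C` with side lengths `a < b < c`,
`t(ABC₁) < t(AB̄C)` and `t(ABC₂) < t(ĀBC)`; together with `t(AB₁C) < t(ABC̄)`
this implies that a minimum area isosceles container of an acute triangle
never equals a special container of the third kind. -/
theorem statement13 (A B C C₁ C₂ Abar Bbar Cbar : Pt)
    (hABC : AffineIndependent ℝ ![A, B, C])
    (hab : dist B C < dist C A) (hbc : dist C A < dist A B)
    (hacute : ∠ B A C < π / 2 ∧ ∠ A B C < π / 2 ∧ ∠ A C B < π / 2)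
    (hC₁ray : OnRay A C C₁) (hC₁ne : C₁ ≠ A) (hC₁dist : dist B C₁ = dist A B)
    (hC₂ray : OnRay B C C₂) (hC₂ne : C₂ ≠ B) (hC₂dist : dist A C₂ = dist A B)
    (hAbarLine : Abar ∈ line[ℝ, A, C]) (hAbarDist : dist Abar B = dist Abar C)
    (hBbarLine : Bbar ∈ line[ℝ, B, C]) (hBbarDist : dist Bbar A = dist Bbar C)
    (hCbarLine : Cbar ∈ line[ℝ, B, C]) (hCbarDist : dist Cbar A = dist Cbar B) :
    triArea A B C₁ < triArea A Bbar C ∧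
    triArea A B C₂ < triArea Abar B C ∧
    ∀ S P R : Pt, IsMinIsoscelesContainer A B C S P R →
      tri S P R ≠ tri Abar B C ∧ tri S P R ≠ tri A Bbar C ∧
        tri S P R ≠ tri A B Cbar := by
  have hBC : B ≠ C := by
    rintro rfl; exact affineIndependent_iff_not_collinear_set.1 hABC (by simp [collinear_pair])
  have ha : 0 < dist B C := dist_pos.2 hBC
  have hCA : C ≠ A := dist_pos.1 (ha.trans hab)
  have hx : 0 < dist B C ^ 2 := by positivity
  have hxy : dist B C ^ 2 < dist C A ^ 2 := by gcongr
  have hyz : dist C A ^ 2 < dist A B ^ 2 := by gcongr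
  have hzxy : dist A B ^ 2 < dist B C ^ 2 + dist C A ^ 2 := by
    have := dist_sq_lt_of_angle_lt hCA.symm hBC hacute.2.2
    rw [dist_comm A C] at this
    linarith
  have hK := triArea_pos hABC
  have hBAC := affineIndependent_swap_left hABC
  have hACB := affineIndependent_swap_right hABC
  have hCAB := affineIndependent_swap_left hACB
  have hCBA := affineIndependent_swap_right hCAB
  obtain ⟨s₁, rfl, hs₁⟩ := hC₁ray.exists_lineMap hCA hC₁ne hC₁dist
  obtain ⟨s₂, rfl, hs₂⟩ := hC₂ray.exists_lineMap hBC.symm hC₂ne (hC₂dist.trans (dist_comm A B))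
  obtain ⟨r₂, rfl, hr₂⟩ := exists_lineMap_of_dist_eq (Set.pair_comm A C ▸ hAbarLine) hAbarDist
  obtain ⟨r₁, rfl, hr₁⟩ := exists_lineMap_of_dist_eq (Set.pair_comm B C ▸ hBbarLine) hBbarDist
  obtain ⟨r₃, rfl, hr₃⟩ := exists_lineMap_of_dist_eq hCbarLine hCbarDist
  obtain ⟨s₃, hs₃⟩ : ∃ s : ℝ,
      s * dist A B ^ 2 = dist A B ^ 2 + dist A C ^ 2 - dist B C ^ 2 :=
    ⟨_, div_mul_cancel₀ _ (hx.trans (hxy.trans hyz)).ne'⟩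
  have hdist₃ := dist_lineMap_eq hs₃
  simp only [dist_comm A C, dist_comm B A, dist_comm C B] at *
  have h₁ : triArea A B (lineMap A C s₁) < triArea A (lineMap C B r₁) C := by
    rw [triArea_lineMap hABC, triArea_swap_right A C (lineMap C B r₁), triArea_swap_left C A,
      triArea_lineMap hCAB,
      triArea_swap_left A C B, triArea_swap_right A B C]
    exact abs_mul_lt_abs_mul hK (hx.trans hxy) (hxy.trans hyz) (by linarith) hs₁
      (by linear_combination hr₁)
  have h₂ : triArea B A (lineMap B C s₂) < triArea (lineMap C A r₂) B C := by
    rw [triArea_lineMap hBAC, triArea_swap_left B (lineMap C A r₂),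
      triArea_swap_right B C (lineMap C A r₂), triArea_swap_left C B (lineMap C A r₂),
      triArea_lineMap hCBA, triArea_swap_left B C A, triArea_swap_right B A C,
      triArea_swap_left A B C]
    exact abs_mul_lt_abs_mul hK hx hyz (by linarith) hs₂ (by linear_combination hr₂)
  have h₃ : triArea A C (lineMap A B s₃) < triArea A B (lineMap B C r₃) := by
    rw [triArea_lineMap hACB, triArea_swap_left B A, triArea_lineMap hBAC,
      triArea_swap_right A B C, triArea_swap_left A B C]
    exact abs_mul_lt_abs_mul hK (hx.trans (hxy.trans hyz)) hxy (by linarith) hs₃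
      (by linear_combination hr₃)
  refine ⟨h₁, triArea_swap_left A B _ ▸ h₂, fun S P R hmin ↦ ⟨?_, ?_, ?_⟩⟩
  · refine hmin.tri_ne (IsIsoscelesContainer.congr_tri (isIsoscelesContainer_lineMap hBAC
      (one_le_of_mul_eq hx hyz hs₂) ?_) (tri_swap_left B A C)) h₂
    rw [hC₂dist, dist_comm]
  · exact hmin.tri_ne (isIsoscelesContainer_lineMap hABC
      (one_le_of_mul_eq (hx.trans hxy) (hxy.trans hyz) hs₁) hC₁dist) h₁
  · refine hmin.tri_ne (IsIsoscelesContainer.congr_tri (isIsoscelesContainer_lineMap hACB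
      (one_le_of_mul_eq (hx.trans (hxy.trans hyz)) hxy hs₃) ?_) (tri_swap_right A C B)) h₃
    rw [hdist₃, dist_comm]
end
end

section
/- Let ABC be a triangle and let SPR be a minimum area isosceles container for ABC. Then each of the vertices A, B, C lies on the boundary of SPR, i.e. on the union of the segments [S,P], [P,R], [R,S], and each of the three segments [S,P], [P,R], [R,S] contains at least one of the points A, B, C. -/
open EuclideanGeometry MeasureTheory Real

noncomputable section

/-- Twice the signed area of the triangle `X Y Z`. -/
def cross (X Y Z : Pt) : ℝ := (Y 0 - X 0) * (Z 1 - X 1) - (Y 1 - X 1) * (Z 0 - X 0)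

/-- The linear map sending the two standard basis vectors to `Y - X` and `Z - X`. -/
def edgeMap (X Y Z : Pt) : Pt →ₗ[ℝ] Pt :=
  Matrix.toLpLin 2 2 !![Y 0 - X 0, Z 0 - X 0; Y 1 - X 1, Z 1 - X 1]

lemma pt_ext {X Y : Pt} (h0 : X 0 = Y 0) (h1 : X 1 = Y 1) : X = Y := by
  ext i; fin_cases i <;> assumption

lemma tri_comm (X Y Z : Pt) : tri Y X Z = tri X Y Z := by
  rw [tri, tri, Set.insert_comm]

lemma tri_swap (X Y Z : Pt) : tri X Z Y = tri X Y Z := by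
  rw [tri, tri, Set.pair_comm]

lemma cross_rotate (X Y Z : Pt) : cross Y Z X = cross X Y Z := by
  unfold cross; ring

lemma cross_swap (X Y Z : Pt) : cross X Z Y = -cross X Y Z := by
  unfold cross; ring

lemma cross_add (X Y Z Q : Pt) : cross X Y Q + cross Y Z Q + cross Z X Q = cross X Y Z := by
  unfold cross; ring

lemma affineIndependent_iff_cross_ne_zero (X Y Z : Pt) :
    AffineIndependent ℝ ![X, Y, Z] ↔ cross X Y Z ≠ 0 := by
  rw [affineIndependent_iff_linearIndependent_vsub ℝ _ (0 : Fin 3)]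
  have e : LinearIndependent ℝ (fun i : {x : Fin 3 // x ≠ 0} ↦ ![X, Y, Z] i -ᵥ ![X, Y, Z] 0) ↔
      LinearIndependent ℝ ![Y - X, Z - X] := by
    rw [← linearIndependent_equiv (finSuccAboveEquiv (0 : Fin 3))]
    apply iff_of_eq
    congr 1
    ext i : 1
    fin_cases i <;> simp [finSuccAboveEquiv]
  rw [e, LinearIndependent.pair_iff]
  constructor
  · intro h h0
    unfold cross at h0
    have h1 := h (Z 0 - X 0) (-(Y 0 - X 0)) (pt_ext (by simp; ring) (by simp; linarith))
    have h2 := h (Z 1 - X 1) (-(Y 1 - X 1)) (pt_ext (by simp; linarith) (by simp; ring))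
    have h3 := h 1 0 (pt_ext (by simp; linarith) (by simp; linarith))
    simp at h3
  · intro h a b hab
    have h0 := congrArg (fun p : Pt ↦ p 0) hab
    have h1 := congrArg (fun p : Pt ↦ p 1) hab
    simp at h0 h1
    constructor
    · apply (mul_eq_zero.mp (_ : a * cross X Y Z = 0)).resolve_right h
      unfold cross; linear_combination (Z 1 - X 1) * h0 - (Z 0 - X 0) * h1
    · apply (mul_eq_zero.mp (_ : b * cross X Y Z = 0)).resolve_right h
      unfold cross; linear_combination -(Y 1 - X 1) * h0 + (Y 0 - X 0) * h1

lemma dist_eq_dist_iff (X Y U V : Pt) : dist X Y = dist U V ↔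
    (X 0 - Y 0) ^ 2 + (X 1 - Y 1) ^ 2 = (U 0 - V 0) ^ 2 + (U 1 - V 1) ^ 2 := by
  rw [EuclideanSpace.dist_eq, EuclideanSpace.dist_eq, Real.sqrt_inj (by positivity) (by positivity)]
  simp [Fin.sum_univ_two, Real.dist_eq, sq_abs]

lemma mem_tri_iff {X Y Z : Pt} (h : cross X Y Z ≠ 0) (Q : Pt) : Q ∈ tri X Y Z ↔
    0 ≤ cross X Y Z * cross X Y Q ∧ 0 ≤ cross X Y Z * cross Y Z Q ∧
      0 ≤ cross X Y Z * cross Z X Q := by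
  have key : ∀ U V : Pt, Convex ℝ {Q : Pt | 0 ≤ cross X Y Z * cross U V Q} := by
    intro U V p hp q hq a b ha hb hab
    simp only [Set.mem_ofPred_eq] at *
    have : cross X Y Z * cross U V (a • p + b • q) =
        a * (cross X Y Z * cross U V p) + b * (cross X Y Z * cross U V q) := by
      obtain rfl : b = 1 - a := by linarith
      simp [cross]; ring
    rw [this]; positivity
  constructor
  · intro hQ
    have := convexHull_min (s := {X, Y, Z}) (t := {Q : Pt | 0 ≤ cross X Y Z * cross X Y Q} ∩
      ({Q : Pt | 0 ≤ cross X Y Z * cross Y Z Q} ∩ {Q : Pt | 0 ≤ cross X Y Z * cross Z X Q}))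
      ?_ ((key _ _).inter ((key _ _).inter (key _ _))) hQ
    · exact this
    · have z : ∀ U V : Pt, cross U V U = 0 ∧ cross U V V = 0 := fun U V ↦ by
        constructor <;> · unfold cross; ring
      have e1 := cross_rotate X Y Z
      have e2 := cross_rotate Y Z X
      rintro q (rfl | rfl | rfl) <;>
        simp [z, e1, e2, mul_self_nonneg]
  · rintro ⟨h1, h2, h3⟩
    have hs := cross_add X Y Z Q
    have pos : ∀ c, 0 ≤ cross X Y Z * c → 0 ≤ c / cross X Y Z := fun c hc ↦ by
      have : c / cross X Y Z = cross X Y Z * c / (cross X Y Z) ^ 2 := by field_simp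
      rw [this]; positivity
    have hm : ∀ U ∈ ({X, Y, Z} : Set Pt), U ∈ tri X Y Z := fun U hU ↦ subset_convexHull ℝ _ hU
    have hc := (convex_convexHull ℝ ({X, Y, Z} : Set Pt)).sum_mem (t := Finset.univ)
      (w := ![cross Y Z Q / cross X Y Z, cross Z X Q / cross X Y Z, cross X Y Q / cross X Y Z])
      (z := ![X, Y, Z])
      (by intro i _; fin_cases i <;> simp [pos, h1, h2, h3])
      (by simp [Fin.sum_univ_three]; field_simp; linarith)
      (by intro i _; fin_cases i <;> apply hm <;> simp)
    rw [tri]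
    convert hc using 1
    apply pt_ext <;> simp [Fin.sum_univ_three] <;> field_simp <;> unfold cross <;> ring

lemma mem_segment_of_cross_eq_zero {X Y Z Q : Pt} (h : cross X Y Z ≠ 0) (hQ : Q ∈ tri X Y Z)
    (h0 : cross X Y Q = 0) : Q ∈ segment ℝ X Y := by
  obtain ⟨-, h2, h3⟩ := (mem_tri_iff h Q).1 hQ
  have hs := cross_add X Y Z Q
  have pos : ∀ c, 0 ≤ cross X Y Z * c → 0 ≤ c / cross X Y Z := fun c hc ↦ by
    have : c / cross X Y Z = cross X Y Z * c / (cross X Y Z) ^ 2 := by field_simp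
    rw [this]; positivity
  refine ⟨_, _, pos _ h2, pos _ h3, by field_simp; linarith, ?_⟩
  apply pt_ext <;> simp <;> field_simp
  · unfold cross at *; linear_combination (-Z 0) * h0
  · unfold cross at *; linear_combination (-Z 1) * h0

lemma eq_of_cross_eq_zero {X Y Z Q : Pt} (h : cross X Y Z ≠ 0) (h1 : cross X Y Q = 0)
    (h2 : cross Z X Q = 0) : Q = X := by
  apply pt_ext
  · apply sub_eq_zero.1
    apply (mul_eq_zero.mp (_ : cross X Y Z * (Q 0 - X 0) = 0)).resolve_left h
    unfold cross at *
    linear_combination (Z 0 - X 0) * h1 + (Y 0 - X 0) * h2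
  · apply sub_eq_zero.1
    apply (mul_eq_zero.mp (_ : cross X Y Z * (Q 1 - X 1) = 0)).resolve_left h
    unfold cross at *
    linear_combination (Z 1 - X 1) * h1 + (Y 1 - X 1) * h2

lemma tri_eq_image (X Y Z : Pt) :
    tri X Y Z = (fun q ↦ X + q) '' (edgeMap X Y Z '' tri 0 !₂[1, 0] !₂[0, 1]) := by
  have hY : X + edgeMap X Y Z !₂[1, 0] = Y := by
    apply pt_ext <;> simp [edgeMap]
  have hZ : X + edgeMap X Y Z !₂[0, 1] = Z := by
    apply pt_ext <;> simp [edgeMap]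
  have hV : {X, Y, Z} = (fun q ↦ X + q) '' (edgeMap X Y Z '' {0, !₂[1, 0], !₂[0, 1]}) := by
    simp only [Set.image_insert_eq, Set.image_singleton, map_zero, add_zero, hY, hZ]
  have ht : ∀ s : Set Pt, convexHull ℝ ((fun q ↦ X + q) '' s) =
      (fun q ↦ X + q) '' convexHull ℝ s := fun s ↦
    (AffineMap.image_convexHull (AffineEquiv.constVAdd ℝ Pt X).toAffineMap s).symm
  rw [tri, tri, hV, ht, LinearMap.image_convexHull]

lemma triArea_eq (X Y Z : Pt) :
    triArea X Y Z = |cross X Y Z| * triArea 0 !₂[1, 0] !₂[0, 1] := by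
  have hd : LinearMap.det (edgeMap X Y Z) = cross X Y Z := by
    rw [edgeMap, Matrix.toLpLin_eq_toLin, LinearMap.det_toLin, Matrix.det_fin_two_of]
    unfold cross; ring
  unfold triArea
  rw [tri_eq_image X Y Z, Set.image_add_left, measure_preimage_add,
    Measure.addHaar_image_linearMap, hd, ENNReal.toReal_mul, ENNReal.toReal_ofReal (abs_nonneg _)]

lemma triArea_std_pos : 0 < triArea 0 !₂[1, 0] !₂[0, 1] := by
  have hc : cross 0 !₂[1, 0] !₂[0, 1] = 1 := by simp [cross]
  unfold triArea
  apply ENNReal.toReal_pos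
  · apply ne_of_gt
    have ho : IsOpen {q : Pt | 0 < q 0 ∧ 0 < q 1 ∧ q 0 + q 1 < 1} := by
      have h0 : IsOpen {q : Pt | 0 < q 0} := isOpen_lt (by fun_prop) (by fun_prop)
      have h1 : IsOpen {q : Pt | 0 < q 1} := isOpen_lt (by fun_prop) (by fun_prop)
      have h2 : IsOpen {q : Pt | q 0 + q 1 < 1} := isOpen_lt (by fun_prop) (by fun_prop)
      exact h0.inter (h1.inter h2)
    refine (ho.measure_pos volume ⟨!₂[1 / 4, 1 / 4], by norm_num⟩).trans_le (measure_mono ?_)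
    rintro q ⟨h0, h1, h2⟩
    rw [mem_tri_iff (by simp [hc]), hc]
    simp [cross]
    refine ⟨h1.le, by linarith, h0.le⟩
  · exact ((Set.toFinite _).isCompact_convexHull (𝕜 := ℝ)).measure_lt_top.ne

lemma container_iff (A B C X Y Z : Pt) : IsIsoscelesContainer A B C X Y Z ↔
    cross X Y Z ≠ 0 ∧ IsIsosceles X Y Z ∧
      A ∈ tri X Y Z ∧ B ∈ tri X Y Z ∧ C ∈ tri X Y Z := by
  unfold IsIsoscelesContainer
  rw [affineIndependent_iff_cross_ne_zero]
  refine and_congr_right fun _ ↦ and_congr_right fun _ ↦ ⟨fun h ↦ ?_, fun h ↦ ?_⟩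
  · refine ⟨h ?_, h ?_, h ?_⟩ <;> apply subset_convexHull <;> simp
  · apply convexHull_min _ (convex_convexHull ℝ _)
    rintro q (rfl | rfl | rfl)
    exacts [h.1, h.2.1, h.2.2]

namespace IsMinIsoscelesContainer

variable {A B C X Y Z : Pt}

lemma abs_cross_le (h : IsMinIsoscelesContainer A B C X Y Z) {X' Y' Z' : Pt}
    (h' : IsIsoscelesContainer A B C X' Y' Z') : |cross X Y Z| ≤ |cross X' Y' Z'| := by
  have := h.2 X' Y' Z' h'
  rw [triArea_eq X, triArea_eq X'] at this
  exact le_of_mul_le_mul_right this triArea_std_pos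

lemma of_cross_eq (h : IsMinIsoscelesContainer A B C X Y Z) {X' Y' Z' : Pt}
    (h' : IsIsoscelesContainer A B C X' Y' Z') (he : cross X' Y' Z' = cross X Y Z) :
    IsMinIsoscelesContainer A B C X' Y' Z' := by
  refine ⟨h', fun S P R hc ↦ ?_⟩
  rw [triArea_eq X', he, ← triArea_eq X]
  exact h.2 S P R hc

lemma rotate (h : IsMinIsoscelesContainer A B C X Y Z) : IsMinIsoscelesContainer A B C Y Z X := by
  have ht : tri Y Z X = tri X Y Z := by
    rw [tri_swap, tri_comm]
  refine h.of_cross_eq ⟨?_, ?_, ?_⟩ (cross_rotate X Y Z)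
  · have := h.1.1
    rw [affineIndependent_iff_cross_ne_zero] at *
    rwa [cross_rotate]
  · have := h.1.2.1
    unfold IsIsosceles at *
    tauto
  · rw [ht]; exact h.1.2.2

lemma swap (h : IsMinIsoscelesContainer A B C X Y Z) : IsMinIsoscelesContainer A B C X Z Y := by
  have ht : tri X Z Y = tri X Y Z := tri_swap _ _ _
  refine ⟨⟨?_, ?_, ?_⟩, ?_⟩
  · have := h.1.1
    rw [affineIndependent_iff_cross_ne_zero] at *
    rwa [cross_swap, neg_ne_zero]
  · unfold IsIsosceles
    rw [dist_comm Z Y, dist_comm Y X, dist_comm X Z]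
    rcases h.1.2.1 with e | e | e
    exacts [.inr (.inr e.symm), .inr (.inl e.symm), .inl e.symm]
  · rw [ht]; exact h.1.2.2
  · unfold triArea; rw [ht]; exact h.2

lemma perm_left (h : IsMinIsoscelesContainer A B C X Y Z) : IsMinIsoscelesContainer B A C X Y Z := by
  have ht : tri B A C = tri A B C := tri_comm _ _ _
  unfold IsMinIsoscelesContainer IsIsoscelesContainer at *
  rwa [ht]

lemma perm_right (h : IsMinIsoscelesContainer A B C X Y Z) :
    IsMinIsoscelesContainer A C B X Y Z := by
  have ht : tri A C B = tri A B C := tri_swap _ _ _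
  unfold IsMinIsoscelesContainer IsIsoscelesContainer at *
  rwa [ht]

end IsMinIsoscelesContainer

lemma eventually_pos_nhdsGT_zero {f : ℝ → ℝ} (hf : Continuous f) (h0 : 0 < f 0) :
    ∀ᶠ t in nhdsWithin 0 (Set.Ioi 0), 0 < f t :=
  ((hf.tendsto 0).eventually (lt_mem_nhds h0)).filter_mono nhdsWithin_le_nhds

lemma continuous_cross {U V W : ℝ → Pt} (hU : Continuous U) (hV : Continuous V)
    (hW : Continuous W) : Continuous fun t ↦ cross (U t) (V t) (W t) := by
  unfold cross; fun_prop

lemma exists_sign_mul_nonpos (a : ℝ) : ∃ ε : ℝ, ε ^ 2 = 1 ∧ ε * a ≤ 0 := by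
  rcases le_total a 0 with h | h
  · exact ⟨1, by norm_num, by linarith⟩
  · exact ⟨-1, by norm_num, by linarith⟩

/-- `Q` lies strictly on the inner side of each side line of the triangle `X Y Z`. -/
def IsInner (X Y Z Q : Pt) : Prop :=
  0 < cross X Y Z * cross X Y Q ∧ 0 < cross X Y Z * cross Y Z Q ∧
    0 < cross X Y Z * cross Z X Q

namespace IsInner

variable {X Y Z Q : Pt}

lemma rotate (h : IsInner X Y Z Q) : IsInner Y Z X Q := by
  unfold IsInner at *
  rw [cross_rotate]
  exact ⟨h.2.1, h.2.2, h.1⟩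

lemma swap (h : IsInner X Y Z Q) : IsInner X Z Y Q := by
  have e (U V : Pt) : cross V U Q = -cross U V Q := by unfold cross; ring
  unfold IsInner at *
  rw [cross_swap, e Z X, e Y Z, e X Y, neg_mul_neg, neg_mul_neg, neg_mul_neg]
  exact ⟨h.2.2, h.2.1, h.1⟩

lemma cross_ne_zero (h : IsInner X Y Z Q) : cross X Y Z ≠ 0 := by
  rintro h0
  have := h.1
  simp [h0] at this

lemma mem_tri (h : IsInner X Y Z Q) : Q ∈ tri X Y Z :=
  (mem_tri_iff h.cross_ne_zero Q).2 ⟨h.1.le, h.2.1.le, h.2.2.le⟩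

lemma eventually {U V W : ℝ → Pt} (hU : Continuous U) (hV : Continuous V) (hW : Continuous W)
    (h : IsInner (U 0) (V 0) (W 0) Q) :
    ∀ᶠ t in nhdsWithin 0 (Set.Ioi 0), IsInner (U t) (V t) (W t) Q := by
  have hD := continuous_cross hU hV hW
  have hQ : Continuous fun _ : ℝ ↦ Q := continuous_const
  exact (eventually_pos_nhdsGT_zero (hD.mul (continuous_cross hU hV hQ)) h.1).and
    ((eventually_pos_nhdsGT_zero (hD.mul (continuous_cross hV hW hQ)) h.2.1).and
      (eventually_pos_nhdsGT_zero (hD.mul (continuous_cross hW hU hQ)) h.2.2))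

end IsInner

/-- Rotation of `P` about `X` by the angle `ε * t`, for `ε = 1` or `ε = -1`. -/
def rot (X : Pt) (ε t : ℝ) (P : Pt) : Pt :=
  !₂[X 0 + (cos t * (P 0 - X 0) - ε * sin t * (P 1 - X 1)),
    X 1 + (ε * sin t * (P 0 - X 0) + cos t * (P 1 - X 1))]

lemma continuous_rot (X : Pt) (ε : ℝ) (P : Pt) : Continuous fun t ↦ rot X ε t P := by
  unfold rot; fun_prop

lemma rot_zero (X : Pt) (ε : ℝ) (P : Pt) : rot X ε 0 P = P := by
  apply pt_ext <;> simp [rot]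

lemma rot_self (X : Pt) (ε t : ℝ) : rot X ε t X = X := by
  apply pt_ext <;> simp [rot]

lemma dist_rot {ε : ℝ} (hε : ε ^ 2 = 1) (X : Pt) (t : ℝ) (P Q : Pt) :
    dist (rot X ε t P) (rot X ε t Q) = dist P Q := by
  rw [dist_eq_dist_iff]
  simp only [rot, PiLp.toLp_apply, Matrix.cons_val_zero, Matrix.cons_val_one]
  linear_combination ((P 0 - Q 0) ^ 2 + (P 1 - Q 1) ^ 2) * (sin t ^ 2 * hε + sin_sq_add_cos_sq t)

lemma cross_rot {ε : ℝ} (hε : ε ^ 2 = 1) (X : Pt) (t : ℝ) (Y Z : Pt) :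
    cross X (rot X ε t Y) (rot X ε t Z) = cross X Y Z := by
  simp only [cross, rot, PiLp.toLp_apply, Matrix.cons_val_zero, Matrix.cons_val_one]
  linear_combination ((Y 0 - X 0) * (Z 1 - X 1) - (Y 1 - X 1) * (Z 0 - X 0)) *
    (sin t ^ 2 * hε + sin_sq_add_cos_sq t)

namespace IsMinIsoscelesContainer

variable {A B C X Y Z : Pt}

lemma cross_ne_zero (h : IsMinIsoscelesContainer A B C X Y Z) : cross X Y Z ≠ 0 :=
  ((container_iff _ _ _ _ _ _).1 h.1).1

lemma exists_cross_eq_zero (h : IsMinIsoscelesContainer A B C X Y Z) :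
    ∃ Q ∈ ({A, B, C} : Set Pt), cross Y Z Q = 0 := by
  by_contra! hne
  obtain ⟨hD, hI, hm⟩ := (container_iff _ _ _ _ _ _).1 h.1
  have hD2 : 0 < cross X Y Z ^ 2 := by positivity
  have hev : ∀ Q ∈ ({A, B, C} : Set Pt), Q ∈ tri X Y Z →
      ∀ᶠ t in nhdsWithin 0 (Set.Ioi 0), 0 < cross X Y Z * cross Y Z Q - t * cross X Y Z ^ 2 := by
    intro Q hQ hQt
    apply eventually_pos_nhdsGT_zero (by fun_prop)
    have := ((mem_tri_iff hD Q).1 hQt).2.1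
    simpa using lt_of_le_of_ne this (mul_ne_zero hD (hne Q hQ)).symm
  have h1 : ∀ᶠ t : ℝ in nhdsWithin 0 (Set.Ioi 0), t ∈ Set.Ioo 0 1 := Ioo_mem_nhdsGT one_pos
  obtain ⟨t, ⟨ht0, ht1⟩, hA, hB, hC⟩ := (h1.and ((hev A (by simp) hm.1).and
    ((hev B (by simp) hm.2.1).and (hev C (by simp) hm.2.2)))).exists
  set Y' : Pt := !₂[X 0 + (1 - t) * (Y 0 - X 0), X 1 + (1 - t) * (Y 1 - X 1)] with hY'
  set Z' : Pt := !₂[X 0 + (1 - t) * (Z 0 - X 0), X 1 + (1 - t) * (Z 1 - X 1)] with hZ'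
  have hr : 0 < 1 - t := by linarith
  have hD' : cross X Y' Z' = (1 - t) ^ 2 * cross X Y Z := by
    simp [cross, hY', hZ']; ring
  have hmem : ∀ Q, Q ∈ tri X Y Z → 0 < cross X Y Z * cross Y Z Q - t * cross X Y Z ^ 2 →
      Q ∈ tri X Y' Z' := by
    intro Q hQ hQt
    obtain ⟨q1, q2, q3⟩ := (mem_tri_iff hD Q).1 hQ
    rw [mem_tri_iff (by rw [hD']; positivity), hD']
    have e1 : cross X Y' Q = (1 - t) * cross X Y Q := by simp [cross, hY']; ring
    have e3 : cross Z' X Q = (1 - t) * cross Z X Q := by simp [cross, hZ']; ring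
    have e2 : cross Y' Z' Q = (1 - t) * (cross Y Z Q - t * cross X Y Z) := by
      simp [cross, hY', hZ']; ring
    rw [e1, e2, e3]
    refine ⟨?_, ?_, ?_⟩
    · calc 0 ≤ (1 - t) ^ 3 * (cross X Y Z * cross X Y Q) := by positivity
        _ = _ := by ring
    · calc 0 ≤ (1 - t) ^ 3 * (cross X Y Z * cross Y Z Q - t * cross X Y Z ^ 2) := by positivity
        _ = _ := by ring
    · calc 0 ≤ (1 - t) ^ 3 * (cross X Y Z * cross Z X Q) := by positivity
        _ = _ := by ring
  have hI' : IsIsosceles X Y' Z' := by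
    unfold IsIsosceles at *
    simp only [dist_eq_dist_iff] at *
    simp only [hY', hZ', PiLp.toLp_apply, Matrix.cons_val_zero, Matrix.cons_val_one]
    rcases hI with e | e | e
    · left; linear_combination (1 - t) ^ 2 * e
    · right; left; linear_combination (1 - t) ^ 2 * e
    · right; right; linear_combination (1 - t) ^ 2 * e
  have hle := h.abs_cross_le ((container_iff A B C X Y' Z').2 ⟨by rw [hD']; positivity, hI',
    hmem A hm.1 hA, hmem B hm.2.1 hB, hmem C hm.2.2 hC⟩)
  rw [hD', abs_mul, abs_of_pos (pow_pos hr 2)] at hle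
  have hlt : (1 - t) ^ 2 < 1 := by nlinarith
  nlinarith [abs_pos.2 hD]

lemma not_isInner_of_deform (h : IsMinIsoscelesContainer A X Y X Y Z) (hA : IsInner X Y Z A)
    {W : ℝ → Pt} (hW : Continuous W) (h0 : W 0 = Z)
    (hiso : ∀ t ∈ Set.Ioo (0 : ℝ) 1, IsIsosceles X Y (W t))
    (hlt : ∀ t ∈ Set.Ioo (0 : ℝ) 1, cross X Y Z * cross X Y (W t) < cross X Y Z ^ 2) : False := by
  have hD := h.cross_ne_zero
  have h1 : ∀ᶠ t : ℝ in nhdsWithin 0 (Set.Ioi 0), t ∈ Set.Ioo 0 1 := Ioo_mem_nhdsGT one_pos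
  have hX : Continuous fun _ : ℝ ↦ X := continuous_const
  have hY : Continuous fun _ : ℝ ↦ Y := continuous_const
  have h2 := IsInner.eventually (Q := A) hX hY hW (by rwa [h0])
  have h3 : ∀ᶠ t : ℝ in nhdsWithin 0 (Set.Ioi 0), 0 < cross X Y Z * cross X Y (W t) := by
    apply eventually_pos_nhdsGT_zero (continuous_const.mul (continuous_cross hX hY hW))
    simpa only [Pi.mul_apply, h0] using mul_self_pos.2 hD
  obtain ⟨t, ht, hin, hpos⟩ := (h1.and (h2.and h3)).exists
  have hle := h.abs_cross_le ((container_iff A X Y X Y (W t)).2 ⟨hin.cross_ne_zero, hiso t ht,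
    hin.mem_tri, subset_convexHull ℝ _ (by simp), subset_convexHull ℝ _ (by simp)⟩)
  have := hlt t ht
  rw [← abs_of_pos hpos, abs_mul, ← sq_abs] at this
  have hD0 : 0 < |cross X Y Z| := abs_pos.2 hD
  nlinarith

lemma not_isInner_of_dist_eq (h : IsMinIsoscelesContainer A X Y X Y Z) (hA : IsInner X Y Z A)
    (e : dist Z X = dist X Y) : False := by
  obtain ⟨ε, hε, hs⟩ := exists_sign_mul_nonpos
    (cross X Y Z * ((Y 0 - X 0) * (Z 0 - X 0) + (Y 1 - X 1) * (Z 1 - X 1)))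
  refine h.not_isInner_of_deform hA (continuous_rot X ε Z) (rot_zero X ε Z) (fun t _ ↦ ?_)
    fun t ht ↦ ?_
  · right; left
    rw [← e, ← dist_rot hε X t Z X, rot_self]
  · have hsin : 0 < sin t := sin_pos_of_pos_of_lt_pi ht.1 (by linarith [ht.2, pi_gt_three])
    have hcos : cos t < 1 := by
      nlinarith [sin_sq_add_cos_sq t, cos_le_one t, neg_one_le_cos t, sq_nonneg (cos t - 1)]
    have hD : 0 < cross X Y Z ^ 2 := by have := h.cross_ne_zero; positivity
    have key : cross X Y Z * cross X Y (rot X ε t Z) = cos t * cross X Y Z ^ 2 +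
        sin t * (ε * (cross X Y Z *
          ((Y 0 - X 0) * (Z 0 - X 0) + (Y 1 - X 1) * (Z 1 - X 1)))) := by
      simp only [cross, rot, PiLp.toLp_apply, Matrix.cons_val_zero, Matrix.cons_val_one]
      ring
    rw [key]
    nlinarith

lemma not_isInner_of_two_vertices (h : IsMinIsoscelesContainer A X Y X Y Z) :
    ¬IsInner X Y Z A := by
  intro hA
  rcases h.1.2.1 with e | e | e
  · refine h.not_isInner_of_deform hA
      (W := fun t ↦ !₂[(1 - t) * Z 0 + t * ((X 0 + Y 0) / 2), (1 - t) * Z 1 + t * ((X 1 + Y 1) / 2)])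
      (by fun_prop) (by apply pt_ext <;> simp) (fun t _ ↦ ?_) fun t ht ↦ ?_
    · left
      rw [dist_eq_dist_iff] at *
      simp only [Matrix.cons_val_zero, Matrix.cons_val_one]
      linear_combination (1 - t) * e
    · have hD : 0 < cross X Y Z ^ 2 := by have := h.cross_ne_zero; positivity
      calc _ = (1 - t) * cross X Y Z ^ 2 := by
            simp only [cross, Matrix.cons_val_zero, Matrix.cons_val_one]
            ring
        _ < _ := by nlinarith [ht.1]
  · exact h.not_isInner_of_dist_eq hA e
  · refine h.perm_right.rotate.swap.not_isInner_of_dist_eq hA.rotate.swap ?_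
    rw [dist_comm Z Y, dist_comm Y X, e]

lemma not_isInner_of_vertex_of_cross_eq_zero (h : IsMinIsoscelesContainer A X C X Y Z)
    (h0 : cross Y Z C = 0) : ¬IsInner X Y Z A := by
  intro hA
  have hD := h.cross_ne_zero
  by_cases hY : cross X Y C = 0
  · obtain rfl := eq_of_cross_eq_zero (by rwa [cross_rotate]) h0 hY
    exact h.not_isInner_of_two_vertices hA
  by_cases hZ : cross Z X C = 0
  · obtain rfl := eq_of_cross_eq_zero (by rwa [cross_rotate, cross_rotate]) hZ h0
    exact h.swap.not_isInner_of_two_vertices hA.swap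
  obtain ⟨c1, -, c3⟩ := (mem_tri_iff hD C).1 ((container_iff _ _ _ _ _ _).1 h.1).2.2.2.2
  obtain ⟨ε, hε, hs⟩ := exists_sign_mul_nonpos
    (cross X Y Z * ((Z 0 - Y 0) * (C 0 - X 0) + (Z 1 - Y 1) * (C 1 - X 1)))
  have kX : Continuous fun _ : ℝ ↦ X := continuous_const
  have kC : Continuous fun _ : ℝ ↦ C := continuous_const
  have kY := continuous_rot X ε Y
  have kZ := continuous_rot X ε Z
  have h1 : ∀ᶠ t : ℝ in nhdsWithin 0 (Set.Ioi 0), t ∈ Set.Ioo 0 1 := Ioo_mem_nhdsGT one_pos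
  have h2 := IsInner.eventually (Q := A) kX kY kZ (by simpa [rot_zero] using hA)
  have h3 := eventually_pos_nhdsGT_zero (continuous_const.mul (continuous_cross kX kY kC))
    (by simpa [rot_zero] using lt_of_le_of_ne c1 (mul_ne_zero hD hY).symm)
  have h4 := eventually_pos_nhdsGT_zero (continuous_const.mul (continuous_cross kZ kX kC))
    (by simpa [rot_zero] using lt_of_le_of_ne c3 (mul_ne_zero hD hZ).symm)
  obtain ⟨t, ht, tA, t1, t3⟩ := (h1.and (h2.and (h3.and h4))).exists
  have hcr := cross_rot hε X t Y Z
  have t2 : 0 < cross X Y Z * cross (rot X ε t Y) (rot X ε t Z) C := by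
    have hsin : 0 < sin t := sin_pos_of_pos_of_lt_pi ht.1 (by linarith [ht.2, pi_gt_three])
    have hcos : cos t < 1 := by
      nlinarith [sin_sq_add_cos_sq t, cos_le_one t, neg_one_le_cos t, sq_nonneg (cos t - 1)]
    have hD2 : 0 < cross X Y Z ^ 2 := by positivity
    have key : cross (rot X ε t Y) (rot X ε t Z) C = cross X (rot X ε t Y) (rot X ε t Z) +
        cos t * (cross Y Z C - cross X Y Z) -
        ε * sin t * ((Z 0 - Y 0) * (C 0 - X 0) + (Z 1 - Y 1) * (C 1 - X 1)) := by
      simp only [cross, rot, PiLp.toLp_apply, Matrix.cons_val_zero, Matrix.cons_val_one]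
      ring
    rw [key, hcr, h0]
    nlinarith
  have tC : IsInner X (rot X ε t Y) (rot X ε t Z) C := by
    unfold IsInner
    rw [hcr]
    exact ⟨t1, t2, t3⟩
  have hI : IsIsosceles X (rot X ε t Y) (rot X ε t Z) := by
    have := h.1.2.1
    unfold IsIsosceles at *
    have e1 := dist_rot hε X t X Y
    have e2 := dist_rot hε X t Z X
    rw [rot_self] at e1 e2
    rwa [dist_rot hε, e1, e2]
  have hmin := h.of_cross_eq ((container_iff _ _ _ _ _ _).2 ⟨tA.cross_ne_zero, hI,
    tA.mem_tri, subset_convexHull ℝ _ (by simp), tC.mem_tri⟩) hcr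
  obtain ⟨Q, hQ, hQ0⟩ := hmin.exists_cross_eq_zero
  rcases hQ with rfl | rfl | rfl
  · exact (right_ne_zero_of_mul tA.2.1.ne') hQ0
  · rw [cross_rotate] at hQ0
    exact tA.cross_ne_zero hQ0
  · exact (right_ne_zero_of_mul tC.2.1.ne') hQ0

lemma not_isInner_of_cross_eq_zero (h : IsMinIsoscelesContainer A B C X Y Z)
    (h1 : cross X Y B = 0) (h2 : cross Z X B = 0) : ¬IsInner X Y Z A := by
  intro hA
  obtain rfl := eq_of_cross_eq_zero h.cross_ne_zero h1 h2
  obtain ⟨Q, rfl | rfl | rfl, hQ0⟩ := h.exists_cross_eq_zero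
  · exact right_ne_zero_of_mul hA.2.1.ne' hQ0
  · rw [cross_rotate] at hQ0
    exact h.cross_ne_zero hQ0
  · exact h.not_isInner_of_vertex_of_cross_eq_zero hQ0 hA

lemma not_isInner (h : IsMinIsoscelesContainer A B C X Y Z) : ¬IsInner X Y Z A := by
  intro hA
  have key : ∀ {X Y Z : Pt}, IsMinIsoscelesContainer A B C X Y Z → IsInner X Y Z A →
      cross Y Z B = 0 ∨ cross Y Z C = 0 := by
    intro X Y Z h hA
    obtain ⟨Q, rfl | rfl | rfl, hQ0⟩ := h.exists_cross_eq_zero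
    exacts [absurd hQ0 (right_ne_zero_of_mul hA.2.1.ne'), .inl hQ0, .inr hQ0]
  have hB := @not_isInner_of_cross_eq_zero A B C
  have hC := @not_isInner_of_cross_eq_zero A C B
  rcases key h hA with e1 | e1 <;> rcases key h.rotate hA.rotate with e2 | e2 <;>
    rcases key h.rotate.rotate hA.rotate.rotate with e3 | e3
  · exact hB h e3 e2 hA
  · exact hB h.rotate.rotate e2 e1 hA.rotate.rotate
  · exact hB h.rotate e1 e3 hA.rotate
  · exact hC h.perm_right e3 e2 hA
  · exact hB h e3 e2 hA
  · exact hC h.perm_right.rotate e1 e3 hA.rotate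
  · exact hC h.perm_right.rotate.rotate e2 e1 hA.rotate.rotate
  · exact hC h.perm_right e3 e2 hA

lemma exists_mem_segment (h : IsMinIsoscelesContainer A B C X Y Z) :
    ∃ Q ∈ ({A, B, C} : Set Pt), Q ∈ segment ℝ X Y := by
  obtain ⟨Q, hQ, hQ0⟩ := h.rotate.rotate.exists_cross_eq_zero
  exact ⟨Q, hQ, mem_segment_of_cross_eq_zero h.cross_ne_zero
    (h.1.2.2 (subset_convexHull ℝ _ hQ)) hQ0⟩

lemma mem_boundary (h : IsMinIsoscelesContainer A B C X Y Z) :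
    A ∈ segment ℝ X Y ∪ segment ℝ Y Z ∪ segment ℝ Z X := by
  by_contra hn
  simp only [Set.mem_union, not_or] at hn
  obtain ⟨⟨n1, n2⟩, n3⟩ := hn
  have hm : ∀ {X Y Z : Pt}, IsMinIsoscelesContainer A B C X Y Z → A ∈ tri X Y Z :=
    fun h ↦ h.1.2.2 (subset_convexHull ℝ _ (by simp))
  have hD := h.cross_ne_zero
  obtain ⟨a1, a2, a3⟩ := (mem_tri_iff hD A).1 (hm h)
  refine h.not_isInner ⟨lt_of_le_of_ne a1 (mul_ne_zero hD fun e ↦ n1 ?_).symm,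
    lt_of_le_of_ne a2 (mul_ne_zero hD fun e ↦ n2 ?_).symm,
    lt_of_le_of_ne a3 (mul_ne_zero hD fun e ↦ n3 ?_).symm⟩
  · exact mem_segment_of_cross_eq_zero hD (hm h) e
  · exact mem_segment_of_cross_eq_zero h.rotate.cross_ne_zero (hm h.rotate) e
  · exact mem_segment_of_cross_eq_zero h.rotate.rotate.cross_ne_zero (hm h.rotate.rotate) e

end IsMinIsoscelesContainer

/-- if `S P R` is a minimum area isosceles container for the
triangle `A B C`, then `A`, `B`, `C` lie on the boundary of `S P R`, and each
side of `S P R` contains at least one of them. -/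
theorem statement15 (A B C S P R : Pt)
    (hABC : AffineIndependent ℝ ![A, B, C])
    (hmin : IsMinIsoscelesContainer A B C S P R) :
    (A ∈ segment ℝ (S) (P) ∪ segment ℝ (P) (R) ∪ segment ℝ (R) (S)) ∧
    (B ∈ segment ℝ (S) (P) ∪ segment ℝ (P) (R) ∪ segment ℝ (R) (S)) ∧
    (C ∈ segment ℝ (S) (P) ∪ segment ℝ (P) (R) ∪ segment ℝ (R) (S)) ∧
    (∃ X ∈ ({A, B, C} : Set Pt), X ∈ segment ℝ (S) (P)) ∧
    (∃ X ∈ ({A, B, C} : Set Pt), X ∈ segment ℝ (P) (R)) ∧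
    (∃ X ∈ ({A, B, C} : Set Pt), X ∈ segment ℝ (R) (S)) := by
  exact ⟨hmin.mem_boundary, hmin.perm_left.mem_boundary,
    hmin.perm_right.perm_left.mem_boundary, hmin.exists_mem_segment,
    hmin.rotate.exists_mem_segment, hmin.rotate.rotate.exists_mem_segment⟩
end
end
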